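/- arXiv:1403.6795 — 3 statements merged into one kernel-verified Lean document; each statement's English description precedes it below -/
import Mathlib

section
/- Let κ be a regular infinite cardinal. If a partial order P is κ-linked, then P has the κ⁺-stationary chain condition. -/
open Cardinal

/-- `C` is closed in `o`: every nonzero ordinal below `o` which is a limit of
elements of `C` belongs to `C`. -/
def IsClosedIn (C : Set Ordinal) (o : Ordinal) : Prop :=
  ∀ α : Ordinal, 0 < α → α < o →
    (∀ β < α, ∃ γ ∈ C, β < γ ∧ γ < α) → α ∈ C

/-- `C` is unbounded in `o`. -/
def IsUnboundedIn (C : Set Ordinal) (o : Ordinal) : Prop :=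
  ∀ β < o, ∃ γ ∈ C, β < γ ∧ γ < o

/-- `C` is a club (closed unbounded) subset of `o`. -/
def IsClubIn (C : Set Ordinal) (o : Ordinal) : Prop :=
  C ⊆ Set.Iio o ∧ IsClosedIn C o ∧ IsUnboundedIn C o

/-- `S^{κ⁺}_κ`: the set of ordinals below `κ⁺` of cofinality `κ`. -/
def cofSet (κ : Cardinal) : Set Ordinal :=
  {ξ : Ordinal | ξ < (Order.succ κ).ord ∧ ξ.cof = κ}

/-- `P` has the `κ⁺`-stationary chain condition: for every `κ⁺`-sequence of
elements of `P` there are a club `C ⊆ κ⁺` and a function `f` regressive on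
`C ∩ S^{κ⁺}_κ` such that conditions with indices in `C ∩ S^{κ⁺}_κ` getting the
same `f`-value are compatible. -/
def HasStationaryCC (κ : Cardinal) (P : Type) [PartialOrder P] : Prop :=
  ∀ p : Ordinal → P,
    ∃ (C : Set Ordinal) (f : Ordinal → Ordinal),
      IsClubIn C (Order.succ κ).ord ∧
      (∀ α ∈ C ∩ cofSet κ, f α < α) ∧
      ∀ α ∈ C ∩ cofSet κ, ∀ β ∈ C ∩ cofSet κ,
        f α = f β → ∃ r : P, r ≤ p α ∧ r ≤ p β

/-- If `κ` is a regular infinite cardinal and the partial order `P` is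
`κ`-linked, then `P` has the `κ⁺`-stationary chain condition. -/
theorem linked_hasStationaryCC (κ : Cardinal) (hκ : κ.IsRegular)
    (P : Type) [PartialOrder P]
    (hlinked : ∃ c : P → Ordinal, (∀ p : P, c p < κ.ord) ∧
      ∀ p q : P, c p = c q → ∃ r : P, r ≤ p ∧ r ≤ q) :
    HasStationaryCC κ P := by
  obtain ⟨c, hc, hlink⟩ := hlinked
  intro p
  refine ⟨Set.Iio (Order.succ κ).ord, fun α => c (p α), ⟨subset_rfl, ?_, ?_⟩, ?_, ?_⟩
  · intro α _ hα _
    exact hα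
  · intro β hβ
    have hlim : Order.IsSuccLimit (Order.succ κ).ord :=
      Cardinal.isSuccLimit_ord (hκ.aleph0_le.trans (Order.le_succ κ))
    have h := hlim.succ_lt hβ
    exact ⟨Order.succ β, h, Order.lt_succ β, h⟩
  · rintro α ⟨_, _, hα⟩
    refine (hc (p α)).trans_le ?_
    rw [Cardinal.ord_le, ← hα]
    exact Ordinal.cof_le_card α
  · intro α _ β _ h
    exact hlink _ _ h
end

section
/- Let κ be a regular infinite cardinal and let P be a partial order with the κ⁺-stationary chain condition. Then for every sequence ⟨p_i : i < κ⁺⟩ of elements of P there is a stationary set T ⊆ κ⁺ such that p_α and p_β are compatible for all α, β ∈ T. -/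
open Cardinal

/-- `S` is a stationary subset of `o`: it meets every club subset of `o`. -/
def IsStationaryIn (S : Set Ordinal) (o : Ordinal) : Prop :=
  S ⊆ Set.Iio o ∧ ∀ C : Set Ordinal, IsClubIn C o → (S ∩ C).Nonempty

open Ordinal in
theorem aux_sup_lt {c : Cardinal} (hc : c.IsRegular) {a : Ordinal} (ha : a < c.ord)
    (f : Set.Iio a → Ordinal) (hf : ∀ i, f i < c.ord) : ⨆ i, f i + 1 < c.ord := by
  apply lift_iSup_add_one_lt_of_lt_cof _ hf
  rwa [← lift_cof, hc.cof_ord, Cardinal.mk_Iio_ordinal, Cardinal.lift_lift, Cardinal.lift_lt,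
    ← Cardinal.lt_ord]

/-- The recursively defined sequence `g ξ = sup_{η < ξ} (h (g η) + 1)`. -/
noncomputable def auxSeq (h : Ordinal.{u} → Ordinal.{u}) (ξ : Ordinal.{u}) : Ordinal.{u} :=
  ⨆ η : Set.Iio ξ, h (auxSeq h η.1) + 1
termination_by ξ
decreasing_by exact η.2

/-- There is a point of cofinality `κ` in the club `C` and the diagonal intersection of `D`. -/
theorem aux_diag (κ : Cardinal) (hκ : κ.IsRegular) (C : Set Ordinal)
    (hC : IsClubIn C (Order.succ κ).ord) (D : Ordinal → Set Ordinal)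
    (hD : ∀ γ < (Order.succ κ).ord, IsClubIn (D γ) (Order.succ κ).ord) :
    ∃ δ ∈ C ∩ cofSet κ, ∀ γ < δ, δ ∈ D γ := by
  have hreg : (Order.succ κ).IsRegular := Cardinal.isRegular_succ hκ.1
  have hlim : Order.IsSuccLimit (Order.succ κ).ord := Cardinal.isSuccLimit_ord hreg.1
  have hlimκ : Order.IsSuccLimit κ.ord := Cardinal.isSuccLimit_ord hκ.1
  have hκlt : κ.ord < (Order.succ κ).ord := Cardinal.ord_lt_ord.2 (Order.lt_succ κ)
  set o := (Order.succ κ).ord with ho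
  have e1 : ∀ x, ∃ y, x ≤ y ∧ (x < o → y ∈ C ∧ x < y ∧ y < o) := by
    intro x
    by_cases hx : x < o
    · obtain ⟨y, hy, h1, h2⟩ := hC.2.2 x hx
      exact ⟨y, h1.le, fun _ => ⟨hy, h1, h2⟩⟩
    · exact ⟨x, le_rfl, fun h => absurd h hx⟩
  have e2 : ∀ γ x, ∃ y, γ < o → x < o → y ∈ D γ ∧ x < y ∧ y < o := by
    intro γ x
    by_cases hx : γ < o ∧ x < o
    · obtain ⟨y, hy, h1, h2⟩ := (hD γ hx.1).2.2 x hx.2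
      exact ⟨y, fun _ _ => ⟨hy, h1, h2⟩⟩
    · exact ⟨x, fun h h' => absurd ⟨h, h'⟩ hx⟩
  choose m hm1 hm2 using e1
  choose n hn using e2
  let h : Ordinal → Ordinal := fun x => max (m x) (⨆ γ : Set.Iio (x + 1), n γ.1 x + 1)
  have hle : ∀ x, x ≤ h x := fun x => (hm1 x).trans (le_max_left _ _)
  have hn_le : ∀ γ x, γ ≤ x → n γ x < h x := by
    intro γ x hγ
    refine lt_of_lt_of_le ?_ (le_max_right _ _)
    exact Ordinal.lt_iSup_add_one (fun γ : Set.Iio (x + 1) => n γ.1 x)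
      ⟨γ, Order.lt_add_one_iff.2 hγ⟩
  have hlt : ∀ x < o, h x < o := by
    intro x hx
    have hx1 : x + 1 < o := hlim.add_one_lt hx
    refine max_lt (hm2 x hx).2.2 (aux_sup_lt hreg hx1 _ ?_)
    rintro ⟨γ, hγ⟩
    exact (hn γ x ((show γ < x + 1 from hγ).trans hx1) hx).2.2
  have gdef : ∀ ξ, auxSeq h ξ = ⨆ η : Set.Iio ξ, h (auxSeq h η.1) + 1 := by
    intro ξ; rw [auxSeq]
  have glt : ∀ ξ < o, auxSeq h ξ < o := by
    intro ξ
    induction ξ using WellFoundedLT.induction with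
    | _ ξ ih =>
      intro hξ
      rw [gdef]
      apply aux_sup_lt hreg hξ (fun η : Set.Iio ξ => h (auxSeq h η.1))
      rintro ⟨η, hη⟩
      exact hlt _ (ih η hη ((show η < ξ from hη).trans hξ))
  have gstep : ∀ η ξ, η < ξ → h (auxSeq h η) < auxSeq h ξ := by
    intro η ξ hη
    rw [gdef ξ]
    exact Ordinal.lt_iSup_add_one (fun η : Set.Iio ξ => h (auxSeq h η.1)) ⟨η, hη⟩
  have hδo := glt _ hκlt
  have hpos : 0 < auxSeq h κ.ord :=
    zero_le.trans_lt (gstep 0 _ hlimκ.bot_lt)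
  have hcofinal : ∀ β < auxSeq h κ.ord, ∃ η < κ.ord, β < auxSeq h η := by
    intro β hβ
    rw [gdef, Ordinal.lt_iSup_add_one_iff] at hβ
    obtain ⟨⟨η, hη⟩, h1⟩ := hβ
    exact ⟨η + 1, hlimκ.add_one_lt hη, h1.trans_lt (gstep _ _ (Order.lt_add_one_iff.2 le_rfl))⟩
  refine ⟨auxSeq h κ.ord, ⟨?_, hδo, ?_⟩, ?_⟩
  · apply hC.2.1 _ hpos hδo
    intro β hβ
    obtain ⟨η, hη, h1⟩ := hcofinal β hβ
    have h2 := hm2 _ (glt η (hη.trans hκlt))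
    exact ⟨m (auxSeq h η), h2.1, h1.trans h2.2.1,
      (le_max_left _ _).trans_lt (gstep _ _ hη)⟩
  · rw [gdef]
    rw [Ordinal.cof_iSup_Iio_add_one (f := fun η : Set.Iio κ.ord => h (auxSeq h η.1)),
      hκ.cof_ord]
    rintro ⟨a, ha⟩ ⟨b, hb⟩ hab
    exact (gstep a b hab).trans_le (hle _)
  · intro γ hγ
    apply (hD γ (hγ.trans hδo)).2.1 _ hpos hδo
    intro β hβ
    obtain ⟨η, hη, h1⟩ := hcofinal (max β γ) (max_lt hβ hγ)
    have h2 := hn γ _ (hγ.trans hδo) (glt η (hη.trans hκlt))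
    exact ⟨n γ (auxSeq h η), h2.1, ((le_max_left _ _).trans_lt h1).trans h2.2.1,
      (hn_le _ _ ((le_max_right _ _).trans_lt h1).le).trans (gstep _ _ hη)⟩

/-- If `κ` is a regular infinite cardinal and `P` has the `κ⁺`-stationary chain
condition, then every `κ⁺`-sequence of elements of `P` has a pairwise
compatible subsequence indexed by a stationary subset of `κ⁺`. -/
theorem stationaryCC_knaster (κ : Cardinal) (hκ : κ.IsRegular)
    (P : Type) [PartialOrder P] (hcc : HasStationaryCC κ P)
    (p : Ordinal → P) :
    ∃ T : Set Ordinal, IsStationaryIn T (Order.succ κ).ord ∧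
      ∀ α ∈ T, ∀ β ∈ T, ∃ r : P, r ≤ p α ∧ r ≤ p β := by
  obtain ⟨C, f, hC, hf, hcomp⟩ := hcc p
  by_contra hcon
  push Not at hcon
  have key : ∀ γ, ∃ D : Set Ordinal, γ < (Order.succ κ).ord →
      IsClubIn D (Order.succ κ).ord ∧ ∀ α ∈ C ∩ cofSet κ, f α = γ → α ∉ D := by
    intro γ
    by_contra hno
    push Not at hno
    have hst : IsStationaryIn {α | α ∈ C ∩ cofSet κ ∧ f α = γ} (Order.succ κ).ord := by
      refine ⟨fun α hα => hα.1.2.1, fun D hD => ?_⟩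
      obtain ⟨α, h1, h2, h3⟩ := (hno D).2 hD
      exact ⟨α, ⟨h1, h2⟩, h3⟩
    obtain ⟨α, hα, β, hβ, hr⟩ := hcon _ hst
    obtain ⟨r, h1, h2⟩ := hcomp α hα.1 β hβ.1 (hα.2.trans hβ.2.symm)
    exact hr r h1 h2
  choose D hD using key
  obtain ⟨δ, hδ, hδD⟩ := aux_diag κ hκ C hC D fun γ hγ => (hD γ hγ).1
  have hlt := hf δ hδ
  exact (hD (f δ) (hlt.trans hδ.2.1)).2 δ hδ rfl (hδD _ hlt)
end

section
/- Let κ be a regular infinite cardinal and let P be a partial order with the κ⁺-stationary chain condition. Then P has the κ⁺-chain condition, i.e., every antichain in P (a set of pairwise incompatible elements) has cardinality at most κ. -/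
open Cardinal

/-- Transfinite iteration of `G`, taking suprema of all earlier values. -/
noncomputable def iterG (G : Ordinal.{0} → Ordinal.{0}) (o : Ordinal.{0}) : Ordinal.{0} :=
  G (⨆ i : Set.Iio o, iterG G i.1)
termination_by o
decreasing_by exact i.2

lemma iSup_Iio_lt {κ : Cardinal.{0}} (hκ : κ.IsRegular) {o : Ordinal.{0}}
    (ho : o < (Order.succ κ).ord) (φ : Set.Iio o → Ordinal.{0})
    (hφ : ∀ i, φ i < (Order.succ κ).ord) : ⨆ i, φ i + 1 < (Order.succ κ).ord := by
  apply Ordinal.lift_iSup_add_one_lt_of_lt_cof _ hφ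
  have hr := Cardinal.isRegular_succ hκ.aleph0_le
  rw [← Ordinal.lift_cof, hr.cof_ord, Cardinal.mk_Iio_ordinal]
  have h1 : o.card ≤ κ := Order.lt_succ_iff.1 (Cardinal.lt_ord.1 ho)
  simpa [← Ordinal.lift_card] using h1

lemma iterG_le {G : Ordinal.{0} → Ordinal.{0}} {o i : Ordinal.{0}} (h : i < o) :
    iterG G i ≤ ⨆ i : Set.Iio o, iterG G i.1 :=
  Ordinal.le_iSup (fun i : Set.Iio o => iterG G i.1) ⟨i, h⟩

/-- If `κ` is a regular infinite cardinal and `P` has the `κ⁺`-stationary chain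
condition, then `P` has the `κ⁺`-chain condition: every antichain of `P` has
cardinality at most `κ`. -/
theorem stationaryCC_cc (κ : Cardinal) (hκ : κ.IsRegular)
    (P : Type) [PartialOrder P] (hcc : HasStationaryCC κ P)
    (A : Set P)
    (hA : ∀ p ∈ A, ∀ q ∈ A, p ≠ q → ¬ ∃ r : P, r ≤ p ∧ r ≤ q) :
    Cardinal.mk A ≤ κ := by
  classical
  by_contra hlt
  rw [not_le] at hlt
  set Λ := (Order.succ κ).ord with hΛ
  have hle : Cardinal.lift.{0} #(Set.Iio Λ) ≤ Cardinal.lift.{1} #A := by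
    rw [Cardinal.mk_Iio_ordinal, hΛ, Cardinal.card_ord]
    simpa using Order.succ_le_of_lt hlt
  obtain ⟨e⟩ := Cardinal.lift_mk_le'.1 hle
  have hpos : (0 : Ordinal) < Λ := by
    have := (Cardinal.isRegular_succ hκ.aleph0_le).ord_pos
    exact this
  obtain ⟨C, f, ⟨hCsub, hCc, hCu⟩, hreg, hcomp⟩ :=
    hcc (fun α => if h : α < Λ then (e ⟨α, h⟩ : P) else (e ⟨0, hpos⟩ : P))
  have hinj : ∀ α ∈ C ∩ cofSet κ, ∀ β ∈ C ∩ cofSet κ, f α = f β → α = β := by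
    intro α hα β hβ hf
    by_contra hne
    have h := hcomp α hα β hβ hf
    have hα' : α < Λ := hα.2.1
    have hβ' : β < Λ := hβ.2.1
    simp only [hα', hβ', dite_true] at h
    refine hA _ (e ⟨α, hα'⟩).2 _ (e ⟨β, hβ'⟩).2 ?_ h
    intro h2
    have := e.injective (Subtype.ext h2)
    exact hne (congrArg Subtype.val this)
  have hlim : Order.IsSuccLimit Λ :=
    Cardinal.isSuccLimit_ord (Cardinal.isRegular_succ hκ.aleph0_le).aleph0_le
  have hG : ∀ β, ∃ c, β < Λ →
      c ∈ C ∧ β < c ∧ ∀ α ∈ C ∩ cofSet κ, f α ≤ β → α < c := by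
    intro β
    by_cases hβ : β < Λ
    swap
    · exact ⟨0, fun h => absurd h hβ⟩
    let g : Set.Iio (Order.succ β) → Ordinal := fun γ =>
      if h : ∃ α ∈ C ∩ cofSet κ, f α = γ.1 then h.choose else 0
    have hg : ∀ i, g i < Λ := by
      intro i
      by_cases h : ∃ α ∈ C ∩ cofSet κ, f α = i.1
      · simp only [g, h, dite_true]
        exact h.choose_spec.1.2.1
      · simp only [g, h, dite_false]
        exact hpos
    have hb := iSup_Iio_lt hκ (hlim.succ_lt hβ) g hg
    obtain ⟨c, hc, hc1, -⟩ := hCu _ (max_lt hβ hb)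
    refine ⟨c, fun _ => ⟨hc, (le_max_left _ _).trans_lt hc1, ?_⟩⟩
    intro α hα hfα
    have h : ∃ α' ∈ C ∩ cofSet κ, f α' = f α := ⟨α, hα, rfl⟩
    have hi : g ⟨f α, Order.lt_succ_of_le hfα⟩ = α := by
      simp only [g, h, dite_true]
      exact hinj _ h.choose_spec.1 _ hα h.choose_spec.2
    have h1 := Ordinal.le_iSup (fun i => g i + 1) ⟨f α, Order.lt_succ_of_le hfα⟩
    simp only [hi] at h1
    have h2 : α < α + 1 := Order.lt_add_one_iff.2 le_rfl
    exact h2.trans_le (h1.trans ((le_max_right _ _).trans hc1.le))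
  choose G hG using hG
  have hsup : ∀ o < Λ, (∀ i < o, iterG G i < Λ) → ⨆ i : Set.Iio o, iterG G i.1 < Λ := by
    intro o ho h
    exact (Ordinal.iSup_le_iSup_add_one _).trans_lt
      (iSup_Iio_lt hκ ho (fun i => iterG G i.1) fun i => h _ i.2)
  have hH : ∀ o, o < Λ → iterG G o < Λ := by
    intro o
    induction o using WellFoundedLT.induction with
    | ind o ih =>
      intro ho
      rw [iterG]
      exact hCsub (hG _ (hsup o ho fun i hi => ih i hi (hi.trans ho))).1
  have hS : ∀ o, o < Λ → ⨆ i : Set.Iio o, iterG G i.1 < Λ := fun o ho =>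
    hsup o ho fun i hi => hH i (hi.trans ho)
  have hmem : ∀ o, o < Λ → iterG G o ∈ C := by
    intro o ho
    rw [iterG]
    exact (hG _ (hS o ho)).1
  have hmono : ∀ i o, i < o → o < Λ → iterG G i < iterG G o := by
    intro i o hi ho
    rw [iterG.eq_1 G o]
    exact (iterG_le hi).trans_lt (hG _ (hS o ho)).2.1
  have hcl : ∀ i o, i < o → o < Λ → ∀ α ∈ C ∩ cofSet κ, f α ≤ iterG G i → α < iterG G o := by
    intro i o hi ho α hα h
    rw [iterG.eq_1 G o]
    exact (hG _ (hS o ho)).2.2 α hα (h.trans (iterG_le hi))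
  have hκΛ : κ.ord < Λ := Cardinal.ord_lt_ord.2 (Order.lt_succ κ)
  have hκlim : Order.IsSuccLimit κ.ord := Cardinal.isSuccLimit_ord hκ.aleph0_le
  set δ := ⨆ i : Set.Iio κ.ord, iterG G i.1 with hδ
  have hδΛ : δ < Λ := hS _ hκΛ
  have hcof : δ.cof = κ := by
    rw [hδ, Ordinal.cof_iSup_Iio (f := fun i : Set.Iio κ.ord => iterG G i.1) _
      hκlim.isSuccPrelimit, hκ.cof_ord]
    intro i j hij
    exact hmono _ _ hij (lt_trans j.2 hκΛ)
  have hex : ∀ β < δ, ∃ i < κ.ord, β < iterG G i := by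
    intro β hβ
    obtain ⟨i, hi⟩ := (Ordinal.lt_iSup_iff).1 hβ
    exact ⟨i.1, i.2, hi⟩
  have hδC : δ ∈ C := by
    refine hCc δ ?_ hδΛ ?_
    · rw [← Ordinal.cof_pos, hcof]
      exact hκ.pos
    · intro β hβ
      obtain ⟨i, hi, hβi⟩ := hex β hβ
      have hs := hκlim.succ_lt hi
      exact ⟨iterG G i, hmem i (hi.trans hκΛ), hβi,
        (hmono _ _ (Order.lt_succ i) (hs.trans hκΛ)).trans_le (iterG_le hs)⟩
  have hδS : δ ∈ C ∩ cofSet κ := ⟨hδC, hδΛ, hcof⟩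
  obtain ⟨i, hi, hfi⟩ := hex _ (hreg δ hδS)
  have hs := hκlim.succ_lt hi
  have h1 := hcl i _ (Order.lt_succ i) (hs.trans hκΛ) δ hδS hfi.le
  exact absurd (h1.trans_le (iterG_le hs)) (lt_irrefl _)
end
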